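/- arXiv:2306.16889 — 2 statements merged into one kernel-verified Lean document; each statement's English description precedes it below -/
import Mathlib

section
/- ∑_{k=1}^∞ (−1)^k (216/49)^k / (k² · C(3k,k)) = 6·arctan²(√3/5) − (1/2)·(log 7)². -/
open Real

lemma beta_nat (a : ℕ) : ∀ b : ℕ, ∫ x in (0:ℝ)..1, x^a * (1-x)^b =
    (a.factorial * b.factorial : ℝ) / ((a+b+1).factorial : ℝ) := by
  induction a with
  | zero =>
    intro b
    have h : ∫ x in (0:ℝ)..1, (1-x)^b = ∫ x in (0:ℝ)..1, x^b := by
      have := intervalIntegral.integral_comp_sub_left (a := 0) (b := 1) (fun x : ℝ => x^b) 1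
      simpa using this
    simp only [pow_zero, one_mul, h, integral_pow]
    rw [show 0 + b + 1 = b + 1 by ring, Nat.factorial_succ]
    have : (b.factorial : ℝ) ≠ 0 := by positivity
    push_cast
    field_simp
    simp
  | succ a ih =>
    intro b
    have key : ∫ x in (0:ℝ)..1, (((a:ℝ)+1) * (x^a * (1-x)^(b+1)) - ((b:ℝ)+1) * (x^(a+1) * (1-x)^b)) = 0 := by
      have := intervalIntegral.integral_eq_sub_of_hasDerivAt (a := 0) (b := 1)
        (f := fun x : ℝ => x^(a+1) * (1-x)^(b+1))
        (f' := fun x : ℝ => ((a:ℝ)+1) * (x^a * (1-x)^(b+1)) - ((b:ℝ)+1) * (x^(a+1) * (1-x)^b))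
        (fun x _ => by
          have h1 := (hasDerivAt_pow (a+1) x).mul (((hasDerivAt_id x).const_sub 1).pow (b+1))
          convert! h1 using 1
          simp
          ring)
        (Continuous.intervalIntegrable (by fun_prop) _ _)
      rw [this]; simp
    rw [intervalIntegral.integral_sub (Continuous.intervalIntegrable (by fun_prop) _ _)
      (Continuous.intervalIntegrable (by fun_prop) _ _), intervalIntegral.integral_const_mul,
      intervalIntegral.integral_const_mul, ih (b+1)] at key
    have hb : ((b:ℝ)+1) ≠ 0 := by positivity
    have : ∫ x in (0:ℝ)..1, x^(a+1) * (1-x)^b =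
      (((a:ℝ)+1) * ((a.factorial * (b+1).factorial : ℝ) / ((a+(b+1)+1).factorial : ℝ))) / ((b:ℝ)+1) := by
      rw [eq_div_iff hb]; linarith
    rw [this, show a + (b+1) + 1 = a+1+b+1 by ring, Nat.factorial_succ a, Nat.factorial_succ b]
    push_cast
    field_simp

lemma coeff_int (k : ℕ) : ∫ x in (0:ℝ)..1, (1-x)^2 * (x*(1-x)^2)^k =
    1 / (((k:ℝ)+1) * (((3*(k+1)).choose (k+1) : ℕ) : ℝ)) := by
  have h : ∀ x : ℝ, (1-x)^2 * (x*(1-x)^2)^k = x^k * (1-x)^(2*k+2) := by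
    intro x; rw [mul_pow, ← pow_mul]; ring
  simp_rw [h]
  rw [beta_nat, Nat.cast_choose ℝ (show k+1 ≤ 3*(k+1) by omega),
    show 3*(k+1) - (k+1) = 2*k+2 by omega, show k + (2*k+2)+1 = 3*(k+1) by ring,
    Nat.factorial_succ k]
  push_cast
  have h1 : ((k.factorial : ℕ) : ℝ) ≠ 0 := by positivity
  have h2 : (((2*k+2).factorial : ℕ) : ℝ) ≠ 0 := by positivity
  have h3 : (((3*(k+1)).factorial : ℕ) : ℝ) ≠ 0 := by positivity
  field_simp

lemma amgm {x : ℝ} (_h0 : 0 ≤ x) (h1 : x ≤ 1) : x*(1-x)^2 ≤ 4/27 := by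
  nlinarith [mul_nonneg (sq_nonneg (3*x-1)) (show 0 ≤ 4 - 3*x by linarith)]

lemma term_bound (k : ℕ) {x y : ℝ} (h0 : 0 ≤ x) (h1 : x ≤ 1) (hy : |y| < 5) :
    ‖(1-x)^2 * (y * (x*(1-x)^2))^k‖ ≤ (20/27:ℝ)^k := by
  have hx := amgm h0 h1
  have hx0 : 0 ≤ x*(1-x)^2 := by positivity
  rw [Real.norm_eq_abs, abs_mul, abs_pow (y * _), abs_mul,
    abs_of_nonneg hx0, abs_of_nonneg (sq_nonneg _)]
  have h2 : |y| * (x*(1-x)^2) ≤ 20/27 := by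
    nlinarith [abs_nonneg y]
  have h3 : (|y| * (x*(1-x)^2))^k ≤ (20/27:ℝ)^k := pow_le_pow_left₀ (by positivity) h2 k
  have h4 : (1-x)^2 ≤ 1 := by nlinarith
  have h5 : 0 ≤ (|y| * (x*(1-x)^2))^k := by positivity
  nlinarith [sq_nonneg (1-x)]

lemma sum_geo : Summable (fun k : ℕ => (20/27:ℝ)^k) :=
  summable_geometric_of_lt_one (by norm_num) (by norm_num)

lemma term_int (k : ℕ) (y : ℝ) : y^k / (((k:ℝ)+1) * (((3*(k+1)).choose (k+1) : ℕ) : ℝ)) =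
    ∫ x in (0:ℝ)..1, (1-x)^2 * (y * (x*(1-x)^2))^k := by
  have : ∀ x : ℝ, (1-x)^2 * (y * (x*(1-x)^2))^k = y^k * ((1-x)^2 * (x*(1-x)^2)^k) := by
    intro x; rw [mul_pow]; ring
  simp_rw [this]
  rw [intervalIntegral.integral_const_mul, coeff_int]
  ring

lemma hasSum_J {y : ℝ} (hy : |y| < 5) :
    HasSum (fun k : ℕ => y^k / (((k:ℝ)+1) * (((3*(k+1)).choose (k+1) : ℕ) : ℝ)))
      (∫ x in (0:ℝ)..1, (1-x)^2 / (1 - y*(x*(1-x)^2))) := by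
  simp_rw [term_int]
  refine intervalIntegral.hasSum_integral_of_dominated_convergence
    (fun k _ => (20/27:ℝ)^k) ?_ ?_ ?_ ?_ ?_
  · intro k
    exact (Continuous.aestronglyMeasurable (by fun_prop))
  · intro k
    refine Filter.Eventually.of_forall fun x hx => ?_
    rw [Set.uIoc_of_le zero_le_one] at hx
    exact term_bound k hx.1.le hx.2 hy
  · exact Filter.Eventually.of_forall fun x _ => sum_geo
  · simp
  · refine Filter.Eventually.of_forall fun x hx => ?_
    rw [Set.uIoc_of_le zero_le_one] at hx
    have hxx := amgm hx.1.le hx.2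
    have hx0 : 0 ≤ x*(1-x)^2 := mul_nonneg hx.1.le (sq_nonneg _)
    rw [div_eq_mul_inv]
    apply HasSum.mul_left
    apply hasSum_geometric_of_norm_lt_one
    rw [norm_mul, Real.norm_eq_abs, Real.norm_eq_abs, abs_of_nonneg hx0]
    nlinarith [abs_nonneg y]

noncomputable def SS (y : ℝ) : ℝ :=
  ∑' k : ℕ, y^(k+1) / (((k:ℝ)+1)^2 * (((3*(k+1)).choose (k+1) : ℕ) : ℝ))

lemma hasDeriv_SS {y : ℝ} (hy : |y| < 5) :
    HasDerivAt SS (∫ x in (0:ℝ)..1, (1-x)^2 / (1 - y*(x*(1-x)^2))) y := by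
  rw [← (hasSum_J hy).tsum_eq]
  have hball : ∀ z : ℝ, z ∈ Set.Ioo (-5:ℝ) 5 → |z| < 5 := fun z hz => abs_lt.2 ⟨hz.1, hz.2⟩
  refine hasDerivAt_tsum_of_isPreconnected (u := fun k : ℕ => (20/27:ℝ)^k)
    (t := Set.Ioo (-5:ℝ) 5) (y₀ := 0)
    (g := fun (k:ℕ) (y:ℝ) => y^(k+1) / (((k:ℝ)+1)^2 * (((3*(k+1)).choose (k+1) : ℕ) : ℝ)))
    (g' := fun (k:ℕ) (y:ℝ) => y^k / (((k:ℝ)+1) * (((3*(k+1)).choose (k+1) : ℕ) : ℝ)))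
    sum_geo isOpen_Ioo isPreconnected_Ioo ?_ ?_ (by simp) ?_ (abs_lt.1 hy)
  · intro k z _
    have h := (hasDerivAt_pow (k+1) z).div_const
      (((k:ℝ)+1)^2 * (((3*(k+1)).choose (k+1) : ℕ) : ℝ))
    convert! h using 1
    have : (((3*(k+1)).choose (k+1) : ℕ) : ℝ) ≠ 0 := by
      have := Nat.choose_pos (show k+1 ≤ 3*(k+1) by omega)
      positivity
    push_cast
    field_simp
  · intro k z hz
    simp only [term_int]
    have := intervalIntegral.norm_integral_le_of_norm_le_const (a := (0:ℝ)) (b := 1)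
      (f := fun x => (1-x)^2 * (z * (x*(1-x)^2))^k) (C := (20/27:ℝ)^k) (by
        intro x hx
        rw [Set.uIoc_of_le zero_le_one] at hx
        exact term_bound k hx.1.le hx.2 (hball z hz))
    simpa using this
  · simp

lemma arctan_triple {w : ℝ} (h0 : 0 < w) (h1 : w ≤ 1/2) :
    arctan (3*√3*w*(1-w^2) / (2*(1+w+w^2)^2 - 3*w*(1+4*w+w^2))) =
      3 * arctan (√3*w/(2+w)) := by
  have hs : √3*√3 = 3 := Real.mul_self_sqrt (by norm_num)
  have hs2 : √3^2 = 3 := by rw [sq, hs]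
  have a1 : (√3*w/(2+w)) * (√3*w/(2+w)) = 3*w^2/(2+w)^2 := by
    field_simp; rw [hs2]
  have l1 : 3*w^2/(2+w)^2 < 1 := by rw [div_lt_one (by positivity)]; nlinarith
  have e1 : (√3*w/(2+w) + √3*w/(2+w)) / (1 - 3*w^2/(2+w)^2) = √3*w*(2+w)/(2+2*w-w^2) := by
    have : 2+2*w-w^2 ≠ 0 := by nlinarith
    have : 2+w ≠ 0 := by positivity
    rw [show 1 - 3*w^2/(2+w)^2 = (2*(2+2*w-w^2))/(2+w)^2 by field_simp; ring]
    generalize 2+2*w-w^2 = E at *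
    field_simp
    ring
  have hd : 0 < 2+2*w-w^2 := by nlinarith
  have a2 : (√3*w*(2+w)/(2+2*w-w^2)) * (√3*w/(2+w)) = 3*w^2/(2+2*w-w^2) := by
    field_simp; rw [hs2]
  have l2 : 3*w^2/(2+2*w-w^2) < 1 := by rw [div_lt_one hd]; nlinarith
  have t1 := Real.arctan_add (x := √3*w/(2+w)) (y := √3*w/(2+w)) (by rw [a1]; exact l1)
  rw [a1, e1] at t1
  have t2 := Real.arctan_add (x := √3*w*(2+w)/(2+2*w-w^2)) (y := √3*w/(2+w)) (by rw [a2]; exact l2)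
  rw [a2] at t2
  rw [show 3 * arctan (√3*w/(2+w)) = arctan (√3*w/(2+w)) + arctan (√3*w/(2+w)) + arctan (√3*w/(2+w)) by ring,
    t1, t2]
  congr 1
  have n5 : 1 - 3*w^2/(2+2*w-w^2) = (2+2*w-4*w^2)/(2+2*w-w^2) := by
    rw [eq_div_iff hd.ne', sub_mul, div_mul_cancel₀ _ hd.ne']; ring
  rw [n5]
  have n1 : 2+2*w-4*w^2 ≠ 0 := by nlinarith
  have n2 : 2*(1+w+w^2)^2 - 3*w*(1+4*w+w^2) ≠ 0 := by
    have : 2*(1+w+w^2)^2 - 3*w*(1+4*w+w^2) = (1-w)^2*(2+w)*(1+2*w) := by ring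
    rw [this]
    have : 0 < 1-w := by linarith
    positivity
  have n3 : 2+w ≠ 0 := by positivity
  have n4 := hd.ne'
  have n6 : (√3*w*(2+w)/(2+2*w-w^2) + √3*w/(2+w)) / ((2+2*w-4*w^2)/(2+2*w-w^2)) =
      (√3*w*((2+w)^2+(2+2*w-w^2)))/((2+w)*(2+2*w-4*w^2)) := by
    generalize 2+2*w-w^2 = E at *
    generalize 2+2*w-4*w^2 = F at *
    field_simp
  rw [n6, div_eq_div_iff n2 (mul_ne_zero n3 n1)]
  ring

lemma J_eval {w : ℝ} (h0 : 0 < w) (h1 : w ≤ 1/2) :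
    ∫ x in (0:ℝ)..1, (1-x)^2 / (1 - (-(27*w^3/(1-w^3)^2))*(x*(1-x)^2)) =
    (1-w^3)^2/(27*w^3) * (w/(1-w+w^2) * log ((1-w^3)/(1-w)^3)
      - 2*√3*w*(1-w)/(1+w^3) * arctan (√3*w/(2+w))) := by
  have hs2 : √3^2 = 3 := Real.sq_sqrt (by norm_num)
  have hw1 : 0 < 1 - w := by linarith
  have hw3 : 1 - w^3 = (1-w)*(1+w+w^2) := by ring
  have hw3' : 1 + w^3 = (1+w)*(1-w+w^2) := by ring
  have hm : 0 < 1-w+w^2 := by nlinarith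
  have hp : 0 < 1+w+w^2 := by positivity
  set p : ℝ → ℝ := fun x => 3*w*x+(1-w)^2 with hpdef
  set q : ℝ → ℝ := fun x => 9*w^2*x^2 - 3*w*(1+4*w+w^2)*x+(1+w+w^2)^2 with hqdef
  set d : ℝ → ℝ := fun x => 2*(1+w+w^2)^2 - 3*w*(1+4*w+w^2)*x with hddef
  have ppos : ∀ x, 0 ≤ x → 0 < p x := fun x hx => by simp only [hpdef]; positivity
  have dpos : ∀ x, x ≤ 1 → 0 < d x := fun x hx => by
    have e : d x = (1-w)^2*(2+w)*(1+2*w) + 3*w*(1+4*w+w^2)*(1-x) := by simp only [hddef]; ring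
    rw [e]
    have : 0 ≤ 1 - x := by linarith
    positivity
  have dq : ∀ x, (d x)^2 + (3*√3*w*(1-w^2)*x)^2 = 4*(1+w+w^2)^2*q x := fun x => by
    simp only [hddef, hqdef]
    linear_combination (9*w^2*(1-w^2)^2*x^2)*hs2
  have qpos : ∀ x, x ≤ 1 → 0 < q x := fun x hx => by
    have h := dq x
    have := dpos x hx
    have h2 : 0 < 4*(1+w+w^2)^2*q x := by rw [← h]; positivity
    exact pos_of_mul_pos_right h2 (by positivity)
  have pq : ∀ x, p x * q x = (1-w^3)^2 + 27*w^3*(x*(1-x)^2) := fun x => by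
    simp only [hpdef, hqdef]; ring
  have hF : ∀ x ∈ Set.uIcc (0:ℝ) 1, HasDerivAt (fun x => (1-w^3)^2/(27*w^3) *
      ((1+w+w^2)/(3*(1-w+w^2)) * log (p x) + (1-w)^2/(3*(1-w+w^2)) * log (q x)
       - 2*√3*w*(1-w)/(3*(1+w^3)) * arctan (3*√3*w*(1-w^2)*x / d x)))
      ((1-x)^2 / (1 - (-(27*w^3/(1-w^3)^2))*(x*(1-x)^2))) x := by
    intro x hx
    rw [Set.uIcc_of_le zero_le_one] at hx
    have hpx := ppos x hx.1
    have hqx := qpos x hx.2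
    have hdx := dpos x hx.2
    have dp : HasDerivAt p (3*w) x := by
      have := ((hasDerivAt_id x).const_mul (3*w)).add_const ((1-w)^2)
      convert! this using 1
      simp
    have dqq : HasDerivAt q (18*w^2*x - 3*w*(1+4*w+w^2)) x := by
      have := ((((hasDerivAt_pow 2 x).const_mul (9*w^2))).sub
        ((hasDerivAt_id x).const_mul (3*w*(1+4*w+w^2)))).add_const ((1+w+w^2)^2)
      convert! this using 1
      simp; ring
    have dd : HasDerivAt d (-(3*w*(1+4*w+w^2))) x := by
      have := ((hasDerivAt_id x).const_mul (3*w*(1+4*w+w^2))).const_sub (2*(1+w+w^2)^2)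
      simpa using this
    have dn : HasDerivAt (fun x : ℝ => 3*√3*w*(1-w^2)*x) (3*√3*w*(1-w^2)) x := by
      have := (hasDerivAt_id x).const_mul (3*√3*w*(1-w^2))
      simpa using this
    have da : HasDerivAt (fun x => arctan (3*√3*w*(1-w^2)*x / d x)) (3*√3*w*(1-w^2)/(2*q x)) x := by
      convert! (dn.div dd hdx.ne').arctan using 1
      have e1 : 1 + (3*√3*w*(1-w^2)*x / d x)^2 = 4*(1+w+w^2)^2*q x/(d x)^2 := by
        rw [← dq x]; field_simp
      simp only [Pi.div_apply]
      rw [e1]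
      have e2 : 3*√3*w*(1-w^2)*d x - 3*√3*w*(1-w^2)*x*(-(3*w*(1+4*w+w^2))) =
        3*√3*w*(1-w^2)*(2*(1+w+w^2)^2) := by simp only [hddef]; ring
      rw [e2]
      field_simp
      ring
    have hmain := ((((dp.log hpx.ne').const_mul ((1+w+w^2)/(3*(1-w+w^2)))).add
      ((dqq.log hqx.ne').const_mul ((1-w)^2/(3*(1-w+w^2))))).sub
      (da.const_mul (2*√3*w*(1-w)/(3*(1+w^3))))).const_mul ((1-w^3)^2/(27*w^3))
    convert! hmain using 1
    have hne : 1 - w^3 ≠ 0 := by rw [hw3]; positivity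
    have e3 : 1 - (-(27*w^3/(1-w^3)^2))*(x*(1-x)^2) = p x * q x / (1-w^3)^2 := by
      rw [pq x]; field_simp; ring
    rw [e3]
    have e4 : 2*√3*w*(1-w)/(3*(1+w^3)) * (3*√3*w*(1-w^2)/(2*q x)) =
        3*w^2*(1-w)^2/((1-w+w^2)*q x) := by
      rw [hw3']
      field_simp
      rw [hs2]; ring
    rw [e4]
    have e5 : 27*w^3*(1-x)^2 * (1-w+w^2)  = (1+w+w^2)*w * q x
        + (1-w)^2/3 * (18*w^2*x - 3*w*(1+4*w+w^2)) * p x - 3*w^2*(1-w)^2 * p x := by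
      simp only [hpdef, hqdef]; ring
    have e6 : (1-x)^2 = ((1+w+w^2)*w * q x
        + (1-w)^2/3 * (18*w^2*x - 3*w*(1+4*w+w^2)) * p x - 3*w^2*(1-w)^2 * p x)/(27*w^3*(1-w+w^2)) := by
      rw [← e5]; field_simp
    rw [e6]
    field_simp
  rw [intervalIntegral.integral_eq_sub_of_hasDerivAt hF]
  · have hp0 : p 0 = (1-w)^2 := by simp [hpdef]
    have hp1 : p 1 = 1+w+w^2 := by simp only [hpdef]; ring
    have hq0 : q 0 = (1+w+w^2)^2 := by simp [hqdef]
    have hq1 : q 1 = (1-w)^2*(1+w+w^2) := by simp only [hqdef]; ring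
    have hd1 : d 1 = 2*(1+w+w^2)^2 - 3*w*(1+4*w+w^2) := by simp [hddef]
    simp only [hp0, hp1, hq0, hq1, hd1, mul_one, mul_zero, zero_div, Real.arctan_zero]
    rw [arctan_triple h0 h1, show (1-w^3)/(1-w)^3 = (1+w+w^2)/(1-w)^2 by rw [hw3]; field_simp,
      Real.log_mul (by positivity) (by positivity), Real.log_div (by positivity) (by positivity),
      Real.log_pow, Real.log_pow]
    have : 1 + w^3 ≠ 0 := by positivity
    field_simp
    push_cast
    ring
  · apply ContinuousOn.intervalIntegrable
    rw [Set.uIcc_of_le zero_le_one]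
    apply ContinuousOn.div (by fun_prop) (by fun_prop)
    intro x hx
    have : 0 ≤ 27*w^3/(1-w^3)^2 := by positivity
    have h3 : 0 ≤ x*(1-x)^2 := mul_nonneg hx.1 (sq_nonneg _)
    nlinarith [mul_nonneg this h3]

lemma main_fn : SS (-(216/49)) = 6*(arctan (√3/5))^2 - (1/2)*(log 7)^2 := by
  set Z : ℝ → ℝ := fun w => -(27*w^3/(1-w^3)^2) with hZ
  have hlt : ∀ w : ℝ, w ≤ 1/2 → 0 ≤ w → 7/8 ≤ 1-w^3 := by
    intro w h1 h0
    have : w^3 ≤ (1/2)^3 := pow_le_pow_left₀ h0 h1 3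
    linarith
  have hZb : ∀ w : ℝ, w ≤ 1/2 → 0 ≤ w → |Z w| < 5 := by
    intro w h1 h0
    have h := hlt w h1 h0
    have h3 : w^3 ≤ (1/2)^3 := pow_le_pow_left₀ h0 h1 3
    simp only [hZ]
    rw [abs_neg, abs_of_nonneg (by positivity), div_lt_iff₀ (by nlinarith)]
    nlinarith
  set G : ℝ → ℝ := fun w => 6*(arctan (√3*w/(2+w)))^2 - (1/2)*(log ((1-w^3)/(1-w)^3))^2 with hG
  have hs2 : √3^2 = 3 := Real.sq_sqrt (by norm_num)
  have hZd : ∀ w : ℝ, w ≤ 1/2 → 0 ≤ w →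
      HasDerivAt Z (-(81*w^2*(1+w^3)/(1-w^3)^3)) w := by
    intro w h1 h0
    have h : 0 < 1-w^3 := by linarith [hlt w h1 h0]
    have a := (((hasDerivAt_pow 3 w).const_mul 27).div
      (((hasDerivAt_pow 3 w).const_sub 1).pow 2) (pow_ne_zero 2 h.ne')).neg
    convert! a using 1
    simp
    field_simp
    ring
  have hGd : ∀ w : ℝ, w ≤ 1/2 → 0 ≤ w →
      HasDerivAt G (6*√3/(1+w+w^2) * arctan (√3*w/(2+w))
        - 3*(1+w)/(1-w^3) * log ((1-w^3)/(1-w)^3)) w := by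
    intro w h1 h0
    have h : 0 < 1-w^3 := by linarith [hlt w h1 h0]
    have h' : 0 < 1-w := by linarith
    have a := ((((hasDerivAt_id w).const_mul (√3)).div ((hasDerivAt_id w).const_add 2)
      (by simp; positivity)).arctan.pow 2).const_mul 6
    have b := ((((((hasDerivAt_pow 3 w).const_sub 1).div
      (((hasDerivAt_id w).const_sub 1).pow 3) (by simp; positivity)).log
        (by simp; constructor <;> positivity)).pow 2)).const_mul (1/2)
    convert! a.sub b using 1
    simp only [id, Pi.div_apply, Pi.pow_apply]
    have e1 : 1 + (√3*w/(2+w))^2 = 4*(1+w+w^2)/(2+w)^2 := by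
      field_simp; rw [hs2]; ring
    rw [e1]
    have hw3 : 1 - w^3 = (1-w)*(1+w+w^2) := by ring
    congr 1
    · simp
      field_simp
      ring
    · have hw3 : 1 - w^3 = (1-w)*(1+w+w^2) := by ring
      simp
      rw [hw3]
      field_simp
      ring
  have hH : ∀ w : ℝ, w ≤ 1/2 → 0 ≤ w → HasDerivAt (fun w => SS (Z w) - G w) 0 w := by
    intro w h1 h0
    have hc := ((hasDeriv_SS (hZb w h1 h0)).comp w (hZd w h1 h0)).sub (hGd w h1 h0)
    convert! hc using 1
    rcases h0.eq_or_lt with h | h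
    · subst h
      simp
    · have h3 : 0 < 1-w^3 := by linarith [hlt w h1 h0]
      have hw3' : 1 + w^3 = (1+w)*(1-w+w^2) := by ring
      have hw3 : 1 - w^3 = (1-w)*(1+w+w^2) := by ring
      have h' : 0 < 1-w := by linarith
      have hm : 0 < 1-w+w^2 := by nlinarith
      simp only [hZ]
      rw [J_eval h h1]
      generalize log ((1-w^3)/(1-w)^3) = L
      generalize arctan (√3*w/(2+w)) = T
      rw [hw3, hw3']
      field_simp
      ring
  have hcont : ContinuousOn (fun w => SS (Z w) - G w) (Set.Icc 0 (1/2)) :=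
    fun w hw => (hH w hw.2 hw.1).continuousAt.continuousWithinAt
  obtain ⟨c, _, hc⟩ := exists_hasDerivAt_eq_slope (fun w => SS (Z w) - G w) (fun _ => 0)
    (show (0:ℝ) < 1/2 by norm_num) hcont (fun w hw => hH w hw.2.le hw.1.le)
  have hS0 : SS (Z 0) = 0 := by simp [hZ, SS]
  have hG0 : G 0 = 0 := by simp [hG]
  have hZ1 : Z (1/2) = -(216/49) := by simp only [hZ]; norm_num
  have hG1 : G (1/2) = 6*(arctan (√3/5))^2 - (1/2)*(log 7)^2 := by
    simp only [hG]
    rw [show √3*(1/2)/(2+1/2) = √3/5 by ring]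
    norm_num
  simp only [hS0, hG0, hZ1, hG1] at hc
  rw [eq_div_iff (by norm_num)] at hc
  linarith

theorem stmt_6 :
    ∑' k : ℕ, (-(216/49) : ℝ)^(k+1) / (((k:ℝ)+1)^2 * (((3*(k+1)).choose (k+1) : ℕ) : ℝ)) =
    6*(Real.arctan (Real.sqrt 3/5))^2 - (1/2)*(Real.log 7)^2 := by
  exact main_fn
end

section
/- ∑_{k=1}^∞ (27/20)^k / (k² · C(3k,k)) = 6·arctan²(√15 − √12) − (1/2)·log²(5/2). -/
open Real

lemma aux_beta (m : ℕ) : ∀ n : ℕ, ∫ t in (0:ℝ)..1, t^m * (1-t)^n = (m.factorial * n.factorial : ℝ) / (m+n+1).factorial := by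
  induction m with
  | zero =>
    intro n
    have h : ∀ t ∈ Set.uIcc (0:ℝ) 1, HasDerivAt (fun t:ℝ => -(1-t)^(n+1)/(n+1)) (t^0 * (1-t)^n) t := by
      intro t _
      have h1 : HasDerivAt (fun t:ℝ => 1-t) (-1) t := by
        simpa using (hasDerivAt_id t).const_sub 1
      refine ((h1.pow (n+1)).neg.div_const ((n:ℝ)+1)).congr_deriv ?_
      have : (n:ℝ)+1 ≠ 0 := by positivity
      push_cast
      field_simp
    rw [intervalIntegral.integral_eq_sub_of_hasDerivAt h (by apply Continuous.intervalIntegrable; fun_prop)]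
    have : (n:ℝ)+1 ≠ 0 := by positivity
    have : (n.factorial:ℝ) ≠ 0 := by positivity
    simp [Nat.factorial_succ]
    field_simp
  | succ m ih =>
    intro n
    have h : ∀ t ∈ Set.uIcc (0:ℝ) 1, HasDerivAt (fun t:ℝ => t^(m+1) * (1-t)^(n+1))
        ((m+1) * (t^m * (1-t)^(n+1)) - (n+1) * (t^(m+1) * (1-t)^n)) t := by
      intro t _
      have h1 : HasDerivAt (fun t:ℝ => 1-t) (-1) t := by
        simpa using (hasDerivAt_id t).const_sub 1
      refine (((hasDerivAt_id t).pow (m+1)).mul (h1.pow (n+1))).congr_deriv ?_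
      simp
      ring
    have h2 := intervalIntegral.integral_eq_sub_of_hasDerivAt h (by apply Continuous.intervalIntegrable; fun_prop)
    rw [intervalIntegral.integral_sub (by apply Continuous.intervalIntegrable; fun_prop) (by apply Continuous.intervalIntegrable; fun_prop),
      intervalIntegral.integral_const_mul, intervalIntegral.integral_const_mul, ih (n+1)] at h2
    simp at h2
    have h3 : (n:ℝ)+1 ≠ 0 := by positivity
    apply mul_left_cancel₀ h3
    have h4 : m + (n+1) + 1 = m+1+n+1 := by ring
    rw [h4] at h2
    rw [← sub_eq_zero.mp h2]
    rw [Nat.factorial_succ m, Nat.factorial_succ n]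
    push_cast
    ring

lemma aux_beta' (k : ℕ) : ∫ t in (0:ℝ)..1, t^k * (1-t)^(2*k+2) = 1 / (((k:ℝ)+1) * ((3*(k+1)).choose (k+1) : ℕ)) := by
  rw [aux_beta, Nat.choose_eq_factorial_div_factorial (by omega), Nat.cast_div (Nat.factorial_mul_factorial_dvd_factorial (by omega)) (by positivity)]
  have h1 : 3*(k+1) - (k+1) = 2*k+2 := by omega
  have h2 : k + (2*k+2) + 1 = 3*(k+1) := by ring
  rw [h1, h2, Nat.factorial_succ k]
  have : (k.factorial:ℝ) ≠ 0 := by positivity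
  have : ((2*k+2).factorial:ℝ) ≠ 0 := by positivity
  have : ((3*(k+1)).factorial:ℝ) ≠ 0 := by positivity
  push_cast
  field_simp

lemma aux_choose (k : ℕ) : (3:ℝ)^k ≤ ((3*k).choose k : ℕ) := by
  have : 3^k ≤ (3*k).choose k := by
    induction k with
    | zero => simp
    | succ k ih =>
      have h := Nat.add_one_mul_choose_eq (3*k+2) k
      have h3 : (3*k).choose k ≤ (3*k+2).choose k := Nat.choose_le_choose k (by omega)
      have h4 : 3*(k+1) = 3*k+2+1 := by ring
      rw [h4]
      have : (k+1) * (3 * (3*k+2).choose k) = (k+1) * ((3*k+2+1).choose (k+1)) := by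
        rw [mul_comm _ ((3*k+2+1).choose (k+1)), ← h]; ring
      have := Nat.eq_of_mul_eq_mul_left (by omega) this
      rw [pow_succ]; omega
  exact_mod_cast this

/-- the series as a function -/
noncomputable def FF (w : ℝ) : ℝ := ∑' k : ℕ, w^(k+1) / (((k:ℝ)+1)^2 * (((3*(k+1)).choose (k+1) : ℕ) : ℝ))

lemma aux_deriv (w : ℝ) (hw : |w| < 2) : HasDerivAt FF (∑' k : ℕ, w^k / (((k:ℝ)+1) * (((3*(k+1)).choose (k+1) : ℕ) : ℝ))) w := by
  unfold FF
  have hpos : ∀ k : ℕ, (0:ℝ) < ((3*(k+1)).choose (k+1) : ℕ) := fun k => by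
    have := aux_choose (k+1)
    have : (0:ℝ) < 3^(k+1) := by positivity
    linarith
  refine hasDerivAt_tsum_of_isPreconnected (u := fun k : ℕ => (2/3:ℝ)^k) (t := Set.Ioo (-2) 2) (y₀ := 0)
    (summable_geometric_of_lt_one (by norm_num) (by norm_num)) isOpen_Ioo isPreconnected_Ioo
    (g' := fun (k : ℕ) w => w^k / (((k:ℝ)+1) * (((3*(k+1)).choose (k+1) : ℕ) : ℝ))) ?_ ?_ (by norm_num) ?_ (abs_lt.mp hw)
  · intro k y _
    have h := ((hasDerivAt_id y).pow (k+1)).div_const (((k:ℝ)+1)^2 * (((3*(k+1)).choose (k+1) : ℕ) : ℝ))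
    refine h.congr_deriv ?_
    have := hpos k
    simp
    field_simp
  · intro k y hy
    have hy' : |y| < 2 := abs_lt.mpr hy
    rw [norm_div, norm_pow, Real.norm_eq_abs, Real.norm_eq_abs, abs_of_pos (mul_pos (by positivity) (hpos k)), div_pow]
    have h3 := aux_choose (k+1)
    have hk : (3:ℝ)^k ≤ ((k:ℝ)+1) * (((3*(k+1)).choose (k+1) : ℕ) : ℝ) := by
      calc (3:ℝ)^k ≤ 3^(k+1) := by gcongr <;> norm_num
        _ ≤ (((3*(k+1)).choose (k+1) : ℕ) : ℝ) := h3
        _ ≤ _ := by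
          have := (hpos k).le
          have hk0 : (0:ℝ) ≤ k := by positivity
          nlinarith
    gcongr
  · convert summable_zero with k
    simp

lemma aux_int (w : ℝ) (hw : |w| < 2) : ∑' k : ℕ, w^k / (((k:ℝ)+1) * (((3*(k+1)).choose (k+1) : ℕ) : ℝ))
    = ∫ t in (0:ℝ)..1, (1-t)^2 / (1 - w * t * (1-t)^2) := by
  have h := intervalIntegral.hasSum_integral_of_dominated_convergence (μ := MeasureTheory.volume) (a := 0) (b := 1)
    (F := fun (k:ℕ) (t:ℝ) => w^k * (t^k * (1-t)^(2*k+2)))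
    (f := fun t => (1-t)^2 / (1 - w * t * (1-t)^2)) (fun k _ => (1/2:ℝ)^k)
    (fun n => (by fun_prop : Continuous _).aestronglyMeasurable) ?_ ?_ ?_ ?_
  · rw [← h.tsum_eq]
    congr 1; ext k
    rw [intervalIntegral.integral_const_mul, aux_beta']
    ring
  · intro n
    filter_upwards with t ht
    rw [Set.uIoc_of_le (by norm_num)] at ht
    have e : w^n * (t^n * (1-t)^(2*n+2)) = (w * t * (1-t)^2)^n * (1-t)^2 := by
      rw [mul_pow, mul_pow, ← pow_mul]; ring
    have hb : |w * t * (1-t)^2| ≤ 1/2 := by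
      have h0 : 0 ≤ t * (1-t)^2 := by have := ht.1; positivity
      rw [mul_assoc, abs_mul, abs_of_nonneg h0]
      have h1 : t * (1-t)^2 ≤ 1/4 := by nlinarith [ht.1, ht.2, sq_nonneg (t-1/2), mul_nonneg ht.1.le (sub_nonneg.mpr ht.2)]
      nlinarith [abs_nonneg w]
    rw [e, norm_mul, norm_pow, Real.norm_eq_abs, Real.norm_eq_abs, abs_of_nonneg (sq_nonneg (1-t))]
    have h2 : (1-t)^2 ≤ 1 := by nlinarith [ht.1, ht.2]
    calc |w * t * (1-t)^2|^n * (1-t)^2 ≤ (1/2)^n * 1 := by gcongr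
      _ = _ := mul_one _
  · filter_upwards with t ht
    exact summable_geometric_of_lt_one (by norm_num) (by norm_num)
  · apply Continuous.intervalIntegrable; fun_prop
  · filter_upwards with t ht
    rw [Set.uIoc_of_le (by norm_num)] at ht
    have hb : |w * t * (1-t)^2| < 1 := by
      have h0 : 0 ≤ t * (1-t)^2 := by have := ht.1; positivity
      rw [mul_assoc, abs_mul, abs_of_nonneg h0]
      have h1 : t * (1-t)^2 ≤ 1/4 := by nlinarith [ht.1, ht.2, sq_nonneg (t-1/2), mul_nonneg ht.1.le (sub_nonneg.mpr ht.2)]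
      nlinarith [abs_nonneg w]
    have := (hasSum_geometric_of_abs_lt_one hb).mul_right ((1-t)^2)
    have e1 : (1-t)^2 / (1 - w * t * (1-t)^2) = (1 - w * t * (1-t)^2)⁻¹ * (1-t)^2 := by
      rw [div_eq_mul_inv, mul_comm]
    have e2 : (fun n : ℕ => w^n * (t^n * (1-t)^(2*n+2))) = fun n => (w * t * (1-t)^2)^n * (1-t)^2 := by
      funext n; rw [mul_pow, mul_pow, ← pow_mul]; ring
    rw [e1, e2]; exact this

lemma aux_prim (r d : ℝ) (hr : 4/3 < r) (hd : 0 < d) (hd2 : d^2 = r*(3*r-4)) :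
    ∫ t in (0:ℝ)..1, (1-t)^2 / ((r-t)*(t^2+(r-2)*t+(r-1)^2)) =
      (-log (r/(r-1)) + 2*r/d*(arctan (r/d) - arctan ((r-2)/d)))/(3*r-1) := by
  have hQ : ∀ t:ℝ, 0 < t^2+(r-2)*t+(r-1)^2 := by
    intro t
    nlinarith [sq_nonneg (2*t+r-2), sq_pos_of_pos hd]
  have h31 : 0 < 3*r-1 := by linarith
  have h : ∀ t ∈ Set.uIcc (0:ℝ) 1, HasDerivAt (fun t:ℝ => (-(r-1)*log (r-t) - r*log (t^2+(r-2)*t+(r-1)^2)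
      + 2*r/d*arctan ((2*t+r-2)/d))/(3*r-1)) ((1-t)^2 / ((r-t)*(t^2+(r-2)*t+(r-1)^2))) t := by
    intro t ht
    rw [Set.uIcc_of_le (by norm_num)] at ht
    have hrt : 0 < r - t := by linarith [ht.2]
    have h1 : HasDerivAt (fun t:ℝ => r-t) (-1) t := by
      simpa using (hasDerivAt_id t).const_sub r
    have h2 : HasDerivAt (fun t:ℝ => t^2+(r-2)*t+(r-1)^2) (2*t+(r-2)) t := by
      simpa using (((hasDerivAt_id t).pow 2).add ((hasDerivAt_id t).const_mul (r-2))).add_const ((r-1)^2)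
    have h3 : HasDerivAt (fun t:ℝ => (2*t+r-2)/d) (2/d) t := by
      simpa using (((((hasDerivAt_id t).const_mul 2).add_const r).sub_const 2).div_const d)
    refine (((((h1.log hrt.ne').const_mul (-(r-1))).sub ((h2.log (hQ t).ne').const_mul r)).add
      (h3.arctan.const_mul (2*r/d))).div_const (3*r-1)).congr_deriv ?_
    have e : 1 + ((2*t+r-2)/d)^2 = 4*(t^2+(r-2)*t+(r-1)^2)/d^2 := by
      field_simp; rw [hd2]; ring
    rw [e]
    have q1 := (hQ t).ne'
    have q2 := hrt.ne'
    have q3 := hd.ne'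
    have q4 := h31.ne'
    obtain ⟨Q, hQd⟩ : ∃ Q, Q = t^2+(r-2)*t+(r-1)^2 := ⟨_, rfl⟩
    obtain ⟨M, hM⟩ : ∃ M, M = 3*r-1 := ⟨_, rfl⟩
    rw [← hQd] at q1 ⊢
    rw [← hM] at q4 ⊢
    field_simp
    rw [hQd, hM]
    ring
  rw [intervalIntegral.integral_eq_sub_of_hasDerivAt h]
  · have hr0 : 0 < r := by linarith
    have hr1 : 0 < r - 1 := by linarith
    have e1 : (1:ℝ)^2+(r-2)*1+(r-1)^2 = r*(r-1) := by ring
    have e2 : (0:ℝ)^2+(r-2)*0+(r-1)^2 = (r-1)^2 := by ring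
    rw [e1, e2, log_mul hr0.ne' hr1.ne', log_pow, log_div hr0.ne' hr1.ne']
    have e3 : 2*1+r-2 = r := by ring
    have e4 : 2*0+r-2 = r-2 := by ring
    rw [e3, e4]
    push_cast
    ring_nf
  · apply ContinuousOn.intervalIntegrable
    rw [Set.uIcc_of_le (by norm_num)]
    apply ContinuousOn.div (by fun_prop) (by fun_prop)
    intro t ht
    have hrt : 0 < r - t := by linarith [ht.2]
    exact (mul_pos hrt (hQ t)).ne'

lemma aux_arctan (s : ℝ) (hs : 0 < s) (hs1 : s < 2/5) :
    arctan ((1+s)/(√3*(1-s))) - arctan ((1-4*s+s^2)/(√3*(1-s^2))) = 3 * arctan (√3*s/(2-s)) := by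
  have h3 : √3^2 = 3 := Real.sq_sqrt (by norm_num)
  have h0 : 0 < √3 := by positivity
  have a1 : arctan (1/√3) + arctan (√3*s/(2-s)) = arctan ((1+s)/(√3*(1-s))) := by
    have hx : 1/√3 * (√3*s/(2-s)) = s/(2-s) := by field_simp
    rw [arctan_add]
    · rw [hx]
      congr 1
      have : 2 - s ≠ 0 := by linarith
      have : 1 - s ≠ 0 := by linarith
      have : 1 - s/(2-s) = 2*(1-s)/(2-s) := by field_simp; ring
      rw [this]
      field_simp
      rw [h3]; ring
    · rw [hx, div_lt_one (by linarith)]; linarith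
  have a2 : arctan (√3*s/(2-s)) + arctan (√3*s/(2-s)) = arctan (√3*s*(2-s)/(2*(1-s-s^2/2))) := by
    have hx : √3*s/(2-s) * (√3*s/(2-s)) = 3*s^2/(2-s)^2 := by
      rw [div_mul_div_comm, ← pow_two, mul_pow, h3]; ring
    rw [arctan_add]
    · rw [hx]
      congr 1
      have : 2 - s ≠ 0 := by linarith
      have : 1 - s - s^2/2 ≠ 0 := by nlinarith
      have e : 1 - 3*s^2/(2-s)^2 = 4*(1-s-s^2/2)/(2-s)^2 := by field_simp; ring
      rw [e]
      field_simp
      ring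
    · rw [hx, div_lt_one (by nlinarith)]; nlinarith
  have a3 : arctan ((1-4*s+s^2)/(√3*(1-s^2))) + arctan (√3*s*(2-s)/(2*(1-s-s^2/2))) = arctan (1/√3) := by
    have p1 : 0 < 1 - s^2 := by nlinarith
    have p2 : 0 < 2-2*s-s^2 := by nlinarith
    have p2n : 2*(1-s)-s^2 ≠ 0 := by nlinarith
    have p2' : 2*(1-s-s^2/2) = 2-2*s-s^2 := by ring
    rw [p2']
    have hx : (1-4*s+s^2)/(√3*(1-s^2)) * (√3*s*(2-s)/(2-2*s-s^2)) = (1-4*s+s^2)*s*(2-s)/((1-s^2)*(2-2*s-s^2)) := by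
      field_simp
    have e : 1 - (1-4*s+s^2)*s*(2-s)/((1-s^2)*(2-2*s-s^2)) = 2*(1-s+s^2)^2/((1-s^2)*(2-2*s-s^2)) := by
      field_simp; ring
    have p3 : 0 < 1-s+s^2 := by nlinarith
    rw [arctan_add]
    · rw [hx, e]
      congr 1
      field_simp
      rw [h3]; ring
    · rw [hx]
      have : 0 < 2*(1-s+s^2)^2/((1-s^2)*(2-2*s-s^2)) := by positivity
      linarith
  linarith

lemma aux_J (s : ℝ) (hs : 0 < s) (hs1 : s < 2/5) :
    ∫ t in (0:ℝ)..1, (1-t)^2 / (1 - (27*s^3/(1+s^3)^2) * t * (1-t)^2) =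
      ((1+s^3)^2/(27*s^3)) * (s/(1+s+s^2) * (log ((1-s+s^2)/(1+s)^2) + 2*√3*((1+s)/(1-s)) * arctan (√3*s/(2-s)))) := by
  have h3 : √3^2 = 3 := Real.sq_sqrt (by norm_num)
  have h0 : 0 < √3 := by positivity
  have p1 : 0 < 1 - s := by linarith
  have p2 : 0 < 1 - s^2 := by nlinarith
  have p3 : 0 < 1 - s + s^2 := by nlinarith
  have hp := aux_prim ((1+s)^2/(3*s)) ((1-s^2)/(√3*s))
    (by rw [lt_div_iff₀ (by positivity)]; nlinarith) (by positivity)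
    (by rw [div_pow, mul_pow, h3]; field_simp; ring)
  have hr1 : (1+s)^2/(3*s) - 1 = (1-s+s^2)/(3*s) := by field_simp; ring
  have e1 : (1+s)^2/(3*s) / ((1-s^2)/(√3*s)) = (1+s)/(√3*(1-s)) := by
    have : 1 - s^2 = (1-s)*(1+s) := by ring
    rw [this]; field_simp; rw [h3]
  have e2 : ((1+s)^2/(3*s) - 2) / ((1-s^2)/(√3*s)) = (1-4*s+s^2)/(√3*(1-s^2)) := by
    field_simp; rw [h3]; ring
  have e3 : (1+s)^2/(3*s) / ((1+s)^2/(3*s) - 1) = ((1-s+s^2)/(1+s)^2)⁻¹ := by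
    rw [hr1]; field_simp
  have e4 : 2*((1+s)^2/(3*s)) / ((1-s^2)/(√3*s)) = 2*((1+s)/(√3*(1-s))) := by
    rw [← e1]; ring
  have e5 : 3*((1+s)^2/(3*s)) - 1 = (1+s+s^2)/s := by field_simp; ring
  rw [e4, e1, e2, e3, e5, aux_arctan s hs hs1, log_inv] at hp
  have e6 : ∀ t : ℝ, (1-t)^2 / (1 - (27*s^3/(1+s^3)^2) * t * (1-t)^2) = ((1+s^3)^2/(27*s^3)) *
      ((1-t)^2 / (((1+s)^2/(3*s)-t)*(t^2+((1+s)^2/(3*s)-2)*t+((1+s)^2/(3*s)-1)^2))) := by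
    intro t
    have e7 : 1 - (27*s^3/(1+s^3)^2) * t * (1-t)^2 = (27*s^3/(1+s^3)^2) *
      (((1+s)^2/(3*s)-t)*(t^2+((1+s)^2/(3*s)-2)*t+((1+s)^2/(3*s)-1)^2)) := by
      field_simp; ring
    rw [e7, ← div_div, div_eq_mul_inv _ (27*s^3/(1+s^3)^2), inv_div]
    ring
  simp_rw [e6]
  rw [intervalIntegral.integral_const_mul, hp]
  congr 1
  have e8 : (1+s)/(√3*(1-s)) = √3/3*((1+s)/(1-s)) := by
    field_simp; rw [h3]
  rw [e8]
  field_simp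

lemma aux_w (s : ℝ) (hs : 0 ≤ s) (hs1 : s < 2/5) : |27*s^3/(1+s^3)^2| < 2 := by
  have h : 0 ≤ s^3 := by positivity
  have h2 : s^3 < (2/5)^3 := by gcongr
  rw [abs_of_nonneg (by positivity), div_lt_iff₀ (by positivity)]
  nlinarith

lemma aux_dw (s : ℝ) (hs : 0 ≤ s) :
    HasDerivAt (fun s:ℝ => 27*s^3/(1+s^3)^2) (81*s^2*(1-s^3)/(1+s^3)^3) s := by
  have h1 : HasDerivAt (fun s:ℝ => s^3) (3*s^2) s := by simpa using hasDerivAt_pow 3 s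
  have h : 0 ≤ s^3 := by positivity
  have h4 : 1 + s^3 ≠ 0 := by positivity
  refine ((h1.const_mul 27).div ((h1.const_add 1).pow 2) (pow_ne_zero 2 h4)).congr_deriv ?_
  simp
  field_simp
  ring

lemma aux_dG (s : ℝ) (hs : 0 ≤ s) (hs1 : s < 2/5) :
    HasDerivAt (fun s:ℝ => 6*(arctan (√3*s/(2-s)))^2 - (1/2)*(log ((1-s+s^2)/(1+s)^2))^2)
      (6*√3*arctan (√3*s/(2-s))/(1-s+s^2) + 3*log ((1-s+s^2)/(1+s)^2)*(1-s)/(1+s^3)) s := by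
  have h3 : √3^2 = 3 := Real.sq_sqrt (by norm_num)
  have p3 : 0 < 1 - s + s^2 := by nlinarith
  have p4 : 0 < 2 - s := by linarith
  have h1 : HasDerivAt (fun s:ℝ => √3*s/(2-s)) (2*√3/(2-s)^2) s := by
    refine (((hasDerivAt_id s).const_mul √3).div ((hasDerivAt_id s).const_sub 2) p4.ne').congr_deriv ?_
    simp
    field_simp
    ring
  have h2 : HasDerivAt (fun s:ℝ => (1-s+s^2)/(1+s)^2) (3*(s-1)/(1+s)^3) s := by
    refine (((((hasDerivAt_id s).const_sub 1).add ((hasDerivAt_id s).pow 2)).div (((hasDerivAt_id s).const_add 1).pow 2) ?_)).congr_deriv ?_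
    · simp; positivity
    · simp
      field_simp
      ring
  refine (((h1.arctan.pow 2).const_mul 6).sub (((h2.log (by positivity)).pow 2).const_mul (1/2))).congr_deriv ?_
  have e : 1 + (√3*s/(2-s))^2 = 4*(1-s+s^2)/(2-s)^2 := by
    rw [div_pow, mul_pow, h3]; field_simp; ring
  have e2 : 1 + s^3 = (1+s)*(1-s+s^2) := by ring
  rw [e, e2]
  field_simp
  ring

lemma aux_main (s₀ : ℝ) (h0 : 0 < s₀) (h1 : s₀ < 2/5) :
    FF (27*s₀^3/(1+s₀^3)^2) = 6*(arctan (√3*s₀/(2-s₀)))^2 - (1/2)*(log ((1-s₀+s₀^2)/(1+s₀)^2))^2 := by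
  have hH : ∀ s, 0 ≤ s → s < 2/5 → HasDerivAt (fun s:ℝ => FF (27*s^3/(1+s^3)^2))
      ((∑' k : ℕ, (27*s^3/(1+s^3)^2)^k / (((k:ℝ)+1) * (((3*(k+1)).choose (k+1) : ℕ) : ℝ))) *
        (81*s^2*(1-s^3)/(1+s^3)^3)) s := fun s hs hs1 =>
    HasDerivAt.comp s (h₂ := FF) (aux_deriv _ (aux_w s hs hs1)) (aux_dw s hs)
  have hD : ∀ s, 0 ≤ s → s < 2/5 → HasDerivAt (fun s:ℝ => FF (27*s^3/(1+s^3)^2) -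
      (6*(arctan (√3*s/(2-s)))^2 - (1/2)*(log ((1-s+s^2)/(1+s)^2))^2)) _ s := fun s hs hs1 =>
    (hH s hs hs1).sub (aux_dG s hs hs1)
  obtain ⟨c, hc, hc'⟩ := exists_hasDerivAt_eq_slope _ _ h0
    (fun s hs => (hD s hs.1 (lt_of_le_of_lt hs.2 h1)).continuousAt.continuousWithinAt)
    (fun s hs => hD s hs.1.le (hs.2.trans h1))
  have hc1 : c < 2/5 := hc.2.trans h1
  have hc0 := hc.1
  rw [aux_int _ (aux_w c hc.1.le hc1), aux_J c hc.1 hc1] at hc'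
  have hF0 : FF 0 = 0 := by simp [FF]
  have p1 : 0 < 1 - c := by linarith
  have p3 : 0 < 1 - c + c^2 := by nlinarith
  have key : ((1+c^3)^2/(27*c^3)) * (c/(1+c+c^2) * (log ((1-c+c^2)/(1+c)^2) + 2*√3*((1+c)/(1-c)) * arctan (√3*c/(2-c))))
      * (81*c^2*(1-c^3)/(1+c^3)^3) - (6*√3*arctan (√3*c/(2-c))/(1-c+c^2) + 3*log ((1-c+c^2)/(1+c)^2)*(1-c)/(1+c^3)) = 0 := by
    generalize log ((1-c+c^2)/(1+c)^2) = L
    generalize arctan (√3*c/(2-c)) = A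
    have e2 : 1 + c^3 = (1+c)*(1-c+c^2) := by ring
    have e3 : 1 - c^3 = (1-c)*(1+c+c^2) := by ring
    rw [e2, e3]
    field_simp
    ring
  rw [key, eq_comm, div_eq_zero_iff] at hc'
  rcases hc' with h | h
  · simp [hF0] at h
    simp only [one_div]
    linarith
  · linarith

theorem stmt_13 :
    ∑' k : ℕ, (27/20 : ℝ)^(k+1) / (((k:ℝ)+1)^2 * (((3*(k+1)).choose (k+1) : ℕ) : ℝ)) =
    6*(Real.arctan (Real.sqrt 15 - Real.sqrt 12))^2 - (1/2)*(Real.log (5/2))^2 := by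
  have h5 : √5^2 = 5 := Real.sq_sqrt (by norm_num)
  have h5a : 0 ≤ √5 := Real.sqrt_nonneg 5
  have l1 : 2.2 < √5 := Real.lt_sqrt_of_sq_lt (by norm_num)
  have l2 : √5 < 2.3 := by rw [Real.sqrt_lt' (by norm_num)]; norm_num
  have h := aux_main ((3-√5)/2) (by linarith) (by linarith)
  have e15 : √15 = √3*√5 := by rw [← Real.sqrt_mul (by norm_num)]; norm_num
  have e12 : √12 = √3*2 := by
    rw [show (12:ℝ) = 3*2^2 by norm_num, Real.sqrt_mul (by norm_num), Real.sqrt_sq (by norm_num)]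
  have a1 : ((3-√5)/2)^2 = 3*((3-√5)/2) - 1 := by nlinarith
  have a2 : ((3-√5)/2)^3 = 8*((3-√5)/2) - 3 := by
    rw [pow_succ, a1]; nlinarith
  have b1 : 27*((3-√5)/2)^3/(1+((3-√5)/2)^3)^2 = 27/20 := by
    rw [a2, div_eq_div_iff (by nlinarith) (by norm_num)]; nlinarith
  have b2 : √3*((3-√5)/2)/(2-(3-√5)/2) = √15 - √12 := by
    rw [e15, e12, div_eq_iff (by linarith)]
    linear_combination (-√3/2)*h5
  have b3 : (1-((3-√5)/2)+((3-√5)/2)^2)/(1+((3-√5)/2))^2 = (5/2)⁻¹ := by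
    rw [a1, div_eq_iff (by nlinarith)]; nlinarith
  rw [b1, b2, b3, log_inv, neg_sq] at h
  exact h
end
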